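/- Let n ≥ 1 and λ = (λ₁,…,λ_n) ∈ ℂⁿ be such that ⟨m,λ⟩ = m₁λ₁+…+m_nλ_n ≠ 0 for every m ∈ ℤⁿ with m₁+…+m_n ≥ 1. Let Ω = {m ∈ ℤⁿ : m₁+…+m_n ≥ 1}, a commutative semigroup under addition. Then the scalar mould M on Ω defined by M^∅ = 1 and M^{(m₁,…,m_r)} = ∏_{i=1}^r ⟨m_i + m_{i+1} + … + m_r, λ⟩^{-1} (all denominators being nonzero by the hypothesis) is symmetral. -/

import Mathlib

/-! Statement 19: symmetrality of the linearisation mould M^{(m₁,…,m_r)} = ∏ ⟨m_i+…+m_r, λ⟩⁻¹. -/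

open scoped Classical

/-- Shuffle coefficient `sh(α, β; ω)`: the number of ways of obtaining `ω` by
interdigitating the letters of `α` and those of `β` while preserving their internal order. -/
noncomputable def sh {Ω : Type*} : List Ω → List Ω → List Ω → ℕ
  | [], [], [] => 1
  | _ :: _, _, [] => 0
  | [], _ :: _, [] => 0
  | [], [], _ :: _ => 0
  | [], b :: β, c :: ω => if b = c then sh [] β ω else 0
  | a :: α, [], c :: ω => if a = c then sh α [] ω else 0
  | a :: α, b :: β, c :: ω =>
      (if a = c then sh α (b :: β) ω else 0) +
      (if b = c then sh (a :: α) β ω else 0)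

/-- Mould multiplication `(M × N)^ω = Σ_{ω = ω¹·ω²} M^{ω¹} N^{ω²}`. -/
noncomputable def mmul {Ω A : Type*} [CommRing A] (M N : List Ω → A) : List Ω → A := fun ω =>
  ∑ i ∈ Finset.range (ω.length + 1), M (ω.take i) * N (ω.drop i)

/-- The unit mould `1^•`. -/
def munit {Ω A : Type*} [CommRing A] : List Ω → A := fun ω => match ω with | [] => 1 | _ => 0

/-- `Σ_ω sh(α,β;ω) M^ω`, realized as a finite sum over the permutations of `α ++ β`
(the shuffle coefficient vanishes on any word which is not a permutation of `α ++ β`). -/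
noncomputable def shSum {Ω A : Type*} [CommRing A] (M : List Ω → A) (α β : List Ω) : A :=
  ∑ ω ∈ (α ++ β).permutations.toFinset, sh α β ω • M ω

/-- A mould is alternal if `M^∅ = 0` and all the shuffle sums vanish. -/
def IsAlternal {Ω A : Type*} [CommRing A] (M : List Ω → A) : Prop :=
  M [] = 0 ∧ ∀ α β : List Ω, α ≠ [] → β ≠ [] → shSum M α β = 0

/-- A mould is symmetral if `M^∅ = 1` and the shuffle sums reproduce the products. -/
def IsSymmetral {Ω A : Type*} [CommRing A] (M : List Ω → A) : Prop :=
  M [] = 1 ∧ ∀ α β : List Ω, α ≠ [] → β ≠ [] → shSum M α β = M α * M β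

/-!
Write `|ω|` for the total weight of the word `ω`. The mould satisfies `M^{aω} = |aω|⁻¹ M^ω`, and
all shuffles of two words have the same total weight. Splitting the shuffles of `aα` and `bβ`
according to their first letter, the sum of `M` over them is, by induction,
`(|aα| + |bβ|)⁻¹ (M^α M^{bβ} + M^{aα} M^β) = (|aα| + |bβ|)⁻¹ (|aα| + |bβ|) M^{aα} M^{bβ}`.
-/

section Shuffles

variable {Ω : Type*}

/-- The shuffles of two words, as a multiset: a word obtained in several ways is repeated, so that
multiplicities are the shuffle coefficients. -/
def shuffles : List Ω → List Ω → Multiset (List Ω)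
  | [], β => {β}
  | a :: α, [] => {a :: α}
  | a :: α, b :: β => (shuffles α (b :: β)).map (a :: ·) + (shuffles (a :: α) β).map (b :: ·)

theorem perm_append_of_mem_shuffles {α β ω : List Ω} (hω : ω ∈ shuffles α β) :
    ω.Perm (α ++ β) := by
  induction α, β using shuffles.induct generalizing ω with
  | case1 β => simp_all [shuffles]
  | case2 a α => simp_all [shuffles]
  | case3 a α b β ihα ihβ =>
    simp only [shuffles, Multiset.mem_add, Multiset.mem_map] at hω
    rcases hω with ⟨ω, hω, rfl⟩ | ⟨ω, hω, rfl⟩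
    · exact (ihα hω).cons a
    · exact ((ihβ hω).cons b).trans List.perm_middle.symm

theorem count_cons_map_cons (a c : Ω) (ω : List Ω) (S : Multiset (List Ω)) :
    (S.map (a :: ·)).count (c :: ω) = if a = c then S.count ω else 0 := by
  split_ifs with hac
  · rw [hac, Multiset.count_map_eq_count' _ S List.cons_injective]
  · exact Multiset.count_eq_zero.2 (by simp [hac])

theorem sh_nil_left (β ω : List Ω) : sh [] β ω = if ω = β then 1 else 0 := by
  induction β generalizing ω <;> cases ω <;> simp_all [sh, eq_comm, ite_and]

theorem sh_nil_right (α ω : List Ω) : sh α [] ω = if ω = α then 1 else 0 := by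
  induction α generalizing ω <;> cases ω <;> simp_all [sh, eq_comm, ite_and]

theorem sh_eq_count_shuffles (α β ω : List Ω) : sh α β ω = (shuffles α β).count ω := by
  induction α, β using shuffles.induct generalizing ω with
  | case1 β => rw [sh_nil_left, shuffles, Multiset.count_singleton]
  | case2 a α => rw [sh_nil_right, shuffles, Multiset.count_singleton]
  | case3 a α b β ihα ihβ =>
    cases ω with
    | nil => simp [sh, shuffles]
    | cons c ω =>
      rw [sh, shuffles, Multiset.count_add, count_cons_map_cons, count_cons_map_cons, ihα, ihβ]

theorem shSum_eq_sum_map_shuffles {A : Type*} [CommRing A] (M : List Ω → A) (α β : List Ω) :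
    shSum M α β = ((shuffles α β).map M).sum := by
  simp only [shSum, sh_eq_count_shuffles, Finset.sum_multiset_map_count]
  symm
  apply Finset.sum_subset
  · intro ω hω
    rw [Multiset.mem_toFinset] at hω
    rw [List.mem_toFinset, List.mem_permutations]
    exact perm_append_of_mem_shuffles hω
  · intro ω _ hω
    rw [Multiset.count_eq_zero.2 (by simpa using hω), zero_smul]

end Shuffles

section LinearisationMould

variable {Ω K : Type*} [Semifield K] (w : Ω → K)

/-- The mould `(ω₁, …, ω_r) ↦ ∏ₖ (w ω_k + … + w ω_r)⁻¹` attached to a weight `w` on the letters. -/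
def linearisationMould (ω : List Ω) : K :=
  ∏ k ∈ Finset.range ω.length, ((ω.drop k).map w).sum⁻¹

theorem linearisationMould_nil : linearisationMould w [] = 1 := by
  simp [linearisationMould]

theorem linearisationMould_cons (a : Ω) (ω : List Ω) :
    linearisationMould w (a :: ω) = ((a :: ω).map w).sum⁻¹ * linearisationMould w ω := by
  simp [linearisationMould, Finset.prod_range_succ', mul_comm]

theorem sum_map_linearisationMould_map_cons (a : Ω) {γ : List Ω}
    {S : Multiset (List Ω)} (hS : ∀ ω ∈ S, ω.Perm γ) :
    ((S.map (a :: ·)).map (linearisationMould w)).sum =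
      ((a :: γ).map w).sum⁻¹ * (S.map (linearisationMould w)).sum := by
  rw [Multiset.map_map, ← Multiset.sum_map_mul_left]
  refine congrArg Multiset.sum (Multiset.map_congr rfl fun ω hω => ?_)
  rw [Function.comp_apply, linearisationMould_cons, (((hS ω hω).cons a).map w).sum_eq]

theorem sum_map_linearisationMould_shuffles
    (hw : ∀ ω : List Ω, ω ≠ [] → (ω.map w).sum ≠ 0) (α β : List Ω) :
    ((shuffles α β).map (linearisationMould w)).sum =
      linearisationMould w α * linearisationMould w β := by
  induction α, β using shuffles.induct with
  | case1 β => simp [shuffles, linearisationMould_nil]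
  | case2 a α => simp [shuffles, linearisationMould_nil]
  | case3 a α b β ihα ihβ =>
    set A := ((a :: α).map w).sum with hA
    set B := ((b :: β).map w).sum with hB
    have hA₀ : A ≠ 0 := hw _ (List.cons_ne_nil a α)
    have hB₀ : B ≠ 0 := hw _ (List.cons_ne_nil b β)
    have sum_a : ((a :: (α ++ b :: β)).map w).sum = A + B := by
      rw [← List.cons_append, List.map_append, List.sum_append]
    have sum_b : ((b :: (a :: α ++ β)).map w).sum = A + B := by
      rw [← sum_a]
      exact (List.perm_middle.symm.map w).sum_eq
    have hAB₀ : A + B ≠ 0 := sum_a ▸ hw _ (List.cons_ne_nil a _)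
    calc ((shuffles (a :: α) (b :: β)).map (linearisationMould w)).sum
      _ = (A + B)⁻¹ * (linearisationMould w α * linearisationMould w (b :: β)) +
          (A + B)⁻¹ * (linearisationMould w (a :: α) * linearisationMould w β) := by
        rw [shuffles, Multiset.map_add, Multiset.sum_add,
          sum_map_linearisationMould_map_cons w a fun _ => perm_append_of_mem_shuffles,
          sum_map_linearisationMould_map_cons w b fun _ => perm_append_of_mem_shuffles,
          sum_a, sum_b, ihα, ihβ]
      _ = linearisationMould w (a :: α) * linearisationMould w (b :: β) := by
        rw [linearisationMould_cons w a, linearisationMould_cons w b, ← hA, ← hB]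
        field_simp

end LinearisationMould

theorem isSymmetral_linearisationMould {Ω K : Type*} [Field K] (w : Ω → K)
    (hw : ∀ ω : List Ω, ω ≠ [] → (ω.map w).sum ≠ 0) : IsSymmetral (linearisationMould w) :=
  ⟨linearisationMould_nil w, fun α β _ _ => by
    rw [shSum_eq_sum_map_shuffles, sum_map_linearisationMould_shuffles w hw]⟩

theorem sum_map_val_mem {G : Type*} [AddMonoid G] {S : AddSubsemigroup G} {ω : List S}
    (hω : ω ≠ []) : (ω.map Subtype.val).sum ∈ S :=
  List.sum_induction_nonempty (· ∈ S) (fun _ _ => S.add_mem) (mt List.map_eq_nil_iff.1 hω)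
    (List.forall_mem_map.2 fun m _ => m.2)

theorem stmt_19_general {G K : Type*} [AddMonoid G] [Field K] (S : AddSubsemigroup G)
    (φ : G →+ K) (hφ : ∀ m ∈ S, φ m ≠ 0) :
    IsSymmetral (fun ω : List S =>
      ∏ k ∈ Finset.range ω.length, (φ ((ω.drop k).map Subtype.val).sum)⁻¹) := by
  have sum_weights (ω : List S) :
      φ (ω.map Subtype.val).sum = (ω.map fun m : S => φ m).sum := by
    rw [map_list_sum, List.map_map, Function.comp_def]
  simp only [sum_weights]
  refine isSymmetral_linearisationMould (fun m : S => φ m) fun ω hω => ?_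
  rw [← sum_weights]
  exact hφ _ (sum_map_val_mem hω)

/-- The additive semigroup of integer vectors of positive total degree. -/
def positiveDegree (ι : Type*) [Fintype ι] : AddSubsemigroup (ι → ℤ) where
  carrier := {m | 1 ≤ ∑ i, m i}
  add_mem' {m m'} (hm : 1 ≤ ∑ i, m i) (hm' : 1 ≤ ∑ i, m' i) := by
    change 1 ≤ ∑ i, (m i + m' i)
    rw [Finset.sum_add_distrib]
    lia

/-- The pairing `⟨m, lam⟩ = ∑ᵢ mᵢ lamᵢ`, as an additive map in the integer vector `m`. -/
def pairing {ι R : Type*} [Fintype ι] [Ring R] (lam : ι → R) : (ι → ℤ) →+ R where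
  toFun m := ∑ i, (m i : R) * lam i
  map_zero' := by simp
  map_add' m m' := by simp [add_mul, Finset.sum_add_distrib]

theorem stmt_19 (n : ℕ) (hn : 1 ≤ n) (lam : Fin n → ℂ)
    (hlam : ∀ m : Fin n → ℤ, 1 ≤ ∑ i, m i → (∑ i, (m i : ℂ) * lam i) ≠ 0) :
    IsSymmetral (fun ω : List {m : Fin n → ℤ // 1 ≤ ∑ i, m i} =>
      ∏ k ∈ Finset.range ω.length,
        (∑ i, ((((ω.drop k).map Subtype.val).sum i : ℂ)) * lam i)⁻¹) := by
  exact stmt_19_general (positiveDegree (Fin n)) (pairing lam) hlam
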